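/- Monotonicity of the optimal prices: assume additionally θ_L > β_H·θ_H. Then p_H* − p_L* = θ_H·ln((θ_H − β_H·θ_H)/(θ_L − β_H·θ_H)) + η_3·(θ_H − θ_L)/(β_L·(η_1 − η_3)), and in particular p_H* > p_L*. -/

import Mathlib

open Real

noncomputable def UW (η2 η3 Ir1 Ir2 θ I p : ℝ) : ℝ :=
  θ * Real.log (η2 * (I - Ir1)) + η3 * (I - Ir2) - p

noncomputable def priceL (θL η2 η3 Ir1 Ir2 IL : ℝ) : ℝ :=
  θL * Real.log (η2 * (IL - Ir1)) + η3 * (IL - Ir2)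

noncomputable def priceH (θL θH η2 η3 Ir1 Ir2 IL IH : ℝ) : ℝ :=
  priceL θL η2 η3 Ir1 Ir2 IL + θH * Real.log ((IH - Ir1) / (IL - Ir1)) + η3 * (IH - IL)

noncomputable def fobj (θL θH βL βH η1 η2 η3 Ir1 Ir2 ΔC IL IH : ℝ) : ℝ :=
  βL * (priceL θL η2 η3 Ir1 Ir2 IL - η1 * IL)
    + βH * (priceH θL θH η2 η3 Ir1 Ir2 IL IH - η1 * IH) + ΔC

noncomputable def ILstar (θL θH βL βH η1 η3 Ir1 : ℝ) : ℝ :=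
  Ir1 + (θL - βH * θH) / (βL * (η1 - η3))

noncomputable def IHstar (θH η1 η3 Ir1 : ℝ) : ℝ :=
  Ir1 + θH / (η1 - η3)

noncomputable def UE (βL βH η1 ΔC pLo IL pHi IH : ℝ) : ℝ :=
  βL * (pLo - η1 * IL) + βH * (pHi - η1 * IH) + ΔC

section Prices

variable {θL θH η2 η3 Ir1 Ir2 IL IH : ℝ}

lemma priceH_sub_priceL :
    priceH θL θH η2 η3 Ir1 Ir2 IL IH - priceL θL η2 η3 Ir1 Ir2 IL =
      θH * log ((IH - Ir1) / (IL - Ir1)) + η3 * (IH - IL) := by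
  unfold priceH
  ring

lemma priceL_lt_priceH (hθH : 0 < θH) (hη3 : 0 ≤ η3) (hIL : Ir1 < IL) (hLH : IL < IH) :
    priceL θL η2 η3 Ir1 Ir2 IL < priceH θL θH η2 η3 Ir1 Ir2 IL IH := by
  have hratio : 1 < (IH - Ir1) / (IL - Ir1) :=
    (one_lt_div (sub_pos.2 hIL)).2 (sub_lt_sub_right hLH Ir1)
  rw [← sub_pos, priceH_sub_priceL]
  exact add_pos_of_pos_of_nonneg (mul_pos hθH (log_pos hratio))
    (mul_nonneg hη3 (sub_nonneg.2 hLH.le))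

end Prices

section OptimalPerformances

variable {θL θH βL βH η1 η3 Ir1 : ℝ}

lemma IHstar_sub_div_ILstar_sub (hβ : βL + βH = 1) (hη : η1 ≠ η3) :
    (IHstar θH η1 η3 Ir1 - Ir1) / (ILstar θL θH βL βH η1 η3 Ir1 - Ir1) =
      (θH - βH * θH) / (θL - βH * θH) := by
  have hθβ : θH * βL = θH - βH * θH := by linear_combination θH * hβ
  calc (IHstar θH η1 η3 Ir1 - Ir1) / (ILstar θL θH βL βH η1 η3 Ir1 - Ir1)
      = (θH / (η1 - η3)) / ((θL - βH * θH) / (βL * (η1 - η3))) := by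
        rw [IHstar, ILstar, add_sub_cancel_left, add_sub_cancel_left]
    _ = (θH * βL * (η1 - η3)) / ((θL - βH * θH) * (η1 - η3)) := by
        rw [div_div_div_eq, mul_assoc, mul_comm (η1 - η3) (θL - βH * θH)]
    _ = (θH - βH * θH) / (θL - βH * θH) := by
        rw [mul_div_mul_right _ _ (sub_ne_zero.2 hη), hθβ]

lemma IHstar_sub_ILstar (hβL : βL ≠ 0) (hβ : βL + βH = 1) :
    IHstar θH η1 η3 Ir1 - ILstar θL θH βL βH η1 η3 Ir1 =
      (θH - θL) / (βL * (η1 - η3)) := by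
  have hnum : βL * θH - (θL - βH * θH) = θH - θL := by linear_combination θH * hβ
  rw [IHstar, ILstar, add_sub_add_left_eq_sub, ← mul_div_mul_left θH (η1 - η3) hβL, ← sub_div,
    hnum]

lemma lt_ILstar (hβL : 0 < βL) (hη : η3 < η1) (hθ : βH * θH < θL) :
    Ir1 < ILstar θL θH βL βH η1 η3 Ir1 :=
  lt_add_of_pos_right Ir1 (div_pos (sub_pos.2 hθ) (mul_pos hβL (sub_pos.2 hη)))

lemma ILstar_lt_IHstar (hβL : 0 < βL) (hβ : βL + βH = 1) (hη : η3 < η1) (hθ : θL < θH) :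
    ILstar θL θH βL βH η1 η3 Ir1 < IHstar θH η1 η3 Ir1 := by
  rw [← sub_pos, IHstar_sub_ILstar hβL.ne' hβ]
  exact div_pos (sub_pos.2 hθ) (mul_pos hβL (sub_pos.2 hη))

end OptimalPerformances

theorem stmt_16
    (θL θH βL βH η1 η2 η3 Ir1 Ir2 ΔC : ℝ)
    (hθL : 0 < θL) (hθ : θL < θH)
    (hβL0 : 0 < βL) (hβL1 : βL < 1)
    (hβH0 : 0 < βH) (hβH1 : βH < 1)
    (hβ : βL + βH = 1)
    (hη3 : 0 < η3) (hη13 : η3 < η1) (hη2 : 0 < η2)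
    (hIr : Ir1 < Ir2)
    (hmono : βH * θH < θL) :
    (priceH θL θH η2 η3 Ir1 Ir2 (ILstar θL θH βL βH η1 η3 Ir1) (IHstar θH η1 η3 Ir1)) - (priceL θL η2 η3 Ir1 Ir2 (ILstar θL θH βL βH η1 η3 Ir1)) =
      θH * Real.log ((θH - βH * θH) / (θL - βH * θH)) +
        η3 * ((θH - θL) / (βL * (η1 - η3))) ∧
    (priceL θL η2 η3 Ir1 Ir2 (ILstar θL θH βL βH η1 η3 Ir1)) < (priceH θL θH η2 η3 Ir1 Ir2 (ILstar θL θH βL βH η1 η3 Ir1) (IHstar θH η1 η3 Ir1)) := by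
  constructor
  · rw [priceH_sub_priceL, IHstar_sub_div_ILstar_sub hβ hη13.ne', IHstar_sub_ILstar hβL0.ne' hβ]
  · exact priceL_lt_priceH (hθL.trans hθ) hη3.le (lt_ILstar hβL0 hη13 hmono)
      (ILstar_lt_IHstar hβL0 hβ hη13 hθ)
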